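/- Let S be a numerical semigroup minimally generated by n_1 < … < n_d, let k be a field and let 1 ≤ i ≤ d. The following are equivalent: (1) AP(S,n_i) is homogeneous; (2) there exists a minimal generating set E of the toric ideal I_S consisting of binomials such that the variable x_i belongs to the support of every non-homogeneous element of E. -/

import Mathlib

open scoped BigOperators

/-- The value `Σ aᵢ nᵢ` of a tuple of coefficients `a` w.r.t. the generators `n`. -/
def sval {d : ℕ} (n : Fin d → ℕ) (a : Fin d → ℕ) : ℕ := ∑ i, a i * n i

/-- The total length `Σ aᵢ` of a factorization. -/
def tlen {d : ℕ} (a : Fin d → ℕ) : ℕ := ∑ i, a i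

/-- The submonoid of `ℕ` generated by `n`. -/
def gen {d : ℕ} (n : Fin d → ℕ) : Set ℕ := {s : ℕ | ∃ a : Fin d → ℕ, s = sval n a}

/-- The Apéry set of the semigroup generated by `n` with respect to `s`:
elements `x` of the semigroup such that `x - s` is not in the semigroup. -/
def Apery {d : ℕ} (n : Fin d → ℕ) (s : ℕ) : Set ℕ :=
  {x : ℕ | x ∈ gen n ∧ ¬ ∃ y ∈ gen n, x = s + y}

/-- A subset `T` is homogeneous if every nonzero element of `T` has all its
factorizations of the same length. -/
def HomogSet {d : ℕ} (n : Fin d → ℕ) (T : Set ℕ) : Prop :=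
  ∀ t ∈ T, t ≠ 0 → ∀ a b : Fin d → ℕ, sval n a = t → sval n b = t → tlen a = tlen b

/-- The order of `s`: the maximal length of a factorization of `s`. -/
noncomputable def ordS {d : ℕ} (n : Fin d → ℕ) (s : ℕ) : ℕ :=
  sSup {l : ℕ | ∃ a : Fin d → ℕ, sval n a = s ∧ tlen a = l}

/-- The torsion set of the semigroup generated by `n`, with respect to the
generator of index `i0` (the smallest generator). -/
noncomputable def Torsion {d : ℕ} (n : Fin d → ℕ) (i0 : Fin d) : Set ℕ :=
  {s : ℕ | s ∈ gen n ∧ ∃ c : ℕ, 0 < c ∧ ordS n s + c < ordS n (s + c * n i0)}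

/-- `n` is a minimal system of generators: any expression of a generator as a
nonnegative combination of the generators has total coefficient sum one. -/
def MinGen {d : ℕ} (n : Fin d → ℕ) : Prop :=
  ∀ r : Fin d, ∀ a : Fin d → ℕ, n r = sval n a → tlen a = 1

/-- `n` generates a numerical semigroup (cofinite in `ℕ`). -/
def IsNumerical {d : ℕ} (n : Fin d → ℕ) : Prop := {x : ℕ | x ∉ gen n}.Finite

/-- The monomial `x^a = Π xᵢ^{aᵢ}`. -/
noncomputable def monom (k : Type*) [CommRing k] {d : ℕ} (a : Fin d → ℕ) :
    MvPolynomial (Fin d) k :=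
  ∏ i, (MvPolynomial.X i : MvPolynomial (Fin d) k) ^ a i

/-- The toric ideal `I_S`: kernel of `k[x₁,…,x_d] → k[t]`, `xᵢ ↦ t^{nᵢ}`. -/
noncomputable def toricIdeal (k : Type*) [CommRing k] {d : ℕ} (n : Fin d → ℕ) :
    Ideal (MvPolynomial (Fin d) k) :=
  RingHom.ker (MvPolynomial.aeval (R := k)
    (fun i => (Polynomial.X : Polynomial k) ^ n i)).toRingHom

/-- `E` is a minimal generating set of the ideal `I`: it spans `I` and no
proper subset spans `I`. -/
def IsMinGenSet {R : Type*} [CommRing R] (I : Ideal R) (E : Set R) : Prop :=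
  Ideal.span E = I ∧ ∀ E' : Set R, E' ⊂ E → Ideal.span E' ≠ I

/-- Membership of an integer in the semigroup generated by `n`. -/
def memZ {d : ℕ} (n : Fin d → ℕ) (z : ℤ) : Prop := ∃ x ∈ gen n, (x : ℤ) = z

/-- A numerical semigroup with Frobenius number `F = max (ℤ ∖ S)` is symmetric
if for every integer `z`, `z ∈ S ↔ F - z ∉ S`. -/
def IsSymmetric {d : ℕ} (n : Fin d → ℕ) : Prop :=
  ∃ F : ℤ, ¬ memZ n F ∧ (∀ z : ℤ, F < z → memZ n z) ∧
    ∀ z : ℤ, memZ n z ↔ ¬ memZ n (F - z)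

/-- A numerical semigroup with Frobenius number `F = max (ℤ ∖ S)` is
pseudo-symmetric if `F` is even and for every integer `z`,
`z ∈ S ↔ (z ≠ F/2 ∧ F - z ∉ S)`. -/
def IsPseudoSymmetric {d : ℕ} (n : Fin d → ℕ) : Prop :=
  ∃ F : ℤ, ¬ memZ n F ∧ (∀ z : ℤ, F < z → memZ n z) ∧ F % 2 = 0 ∧
    ∀ z : ℤ, memZ n z ↔ (z ≠ F / 2 ∧ ¬ memZ n (F - z))

/-- The generators `q·m₁,…,q·m_d, p·n₁,…,p·n_e` of the gluing of two numerical
semigroups. -/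
def glueGen {d e : ℕ} (mg : Fin d → ℕ) (ng : Fin e → ℕ) (p q : ℕ) :
    Fin (d + e) → ℕ :=
  Fin.append (fun i => q * mg i) (fun i => p * ng i)

/-!
Both implications pass through the ideal spanned by the *admissible* binomials `x^a - x^b ∈ I_S`,
those which are homogeneous or involve `xᵢ`: condition (2) says that this ideal is all of `I_S`.

An element of `S` lies in `AP(S, nᵢ)` exactly when none of its factorizations uses `nᵢ`. So if
`x^a - x^b ∈ I_S` is not homogeneous and `AP(S, nᵢ)` is, then the common value of `a` and `b` has
a factorization `c` using `nᵢ`, and `x^a - x^b = (x^a - x^c) + (x^c - x^b)` is a sum of two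
admissible binomials. Conversely, since divisors of elements of `AP(S, nᵢ)` are again in
`AP(S, nᵢ)`, having the same value, and the same length if that value is in `AP(S, nᵢ)`, is a
congruence on `ℕ^d`. It contains the exponents of every admissible binomial, and a binomial in an
ideal spanned by binomials of a congruence has congruent exponents, as one sees in the algebra of
the quotient monoid.
-/

theorem exists_isMinGenSet_subset {R : Type*} [CommRing R] {B : Set R} (hB : (Ideal.span B).FG) :
    ∃ E ⊆ B, IsMinGenSet (Ideal.span B) E := by
  obtain ⟨F, hFB, hF⟩ := (Submodule.fg_span_iff_fg_span_finset_subset B).1 hB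
  obtain ⟨G, hGF, hG⟩ := exists_minimal_le_of_wellFoundedLT
    (fun G : Finset R => Ideal.span (G : Set R) = Ideal.span B) F hF.symm
  refine ⟨G, (Finset.coe_subset.2 hGF).trans hFB, hG.prop, fun E' hE' hspan => ?_⟩
  lift E' to Finset R using G.finite_toSet.subset hE'.subset
  exact hG.not_prop_of_lt (Finset.coe_ssubset.1 hE') hspan

section Factorizations

variable {d : ℕ} (n : Fin d → ℕ)

theorem sval_add (a b : Fin d → ℕ) : sval n (a + b) = sval n a + sval n b := by
  simp [sval, add_mul, Finset.sum_add_distrib]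

theorem sval_single (i : Fin d) : sval n (Pi.single i 1) = n i := by
  simp [sval, Pi.single_apply]

theorem tlen_add (a b : Fin d → ℕ) : tlen (a + b) = tlen a + tlen b := by
  simp [tlen, Finset.sum_add_distrib]

variable {n}

theorem sval_eq_zero_iff (hn : ∀ j, 0 < n j) {a : Fin d → ℕ} : sval n a = 0 ↔ a = 0 := by
  simp [sval, funext_iff, (hn _).ne']

theorem sval_mem_apery_iff {i : Fin d} {a : Fin d → ℕ} :
    sval n a ∈ Apery n (n i) ↔ ∀ c, sval n c = sval n a → c i = 0 := by
  constructor
  · rintro ⟨-, hna⟩ c hc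
    by_contra hci
    have hle : Pi.single i 1 ≤ c :=
      update_le_iff.2 ⟨Nat.one_le_iff_ne_zero.2 hci, fun _ _ => Nat.zero_le _⟩
    refine hna ⟨sval n (c - Pi.single i 1), ⟨_, rfl⟩, ?_⟩
    rw [← hc, ← sval_single n i, ← sval_add, add_tsub_cancel_of_le hle]
  · refine fun h => ⟨⟨a, rfl⟩, ?_⟩
    rintro ⟨-, ⟨c, rfl⟩, hc⟩
    have hci := h (Pi.single i 1 + c) (by rw [sval_add, sval_single, hc])
    simp at hci

theorem sval_mem_apery_of_add_left {s : ℕ} {a b : Fin d → ℕ}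
    (h : sval n (a + b) ∈ Apery n s) : sval n a ∈ Apery n s := by
  refine ⟨⟨a, rfl⟩, ?_⟩
  rintro ⟨-, ⟨c, rfl⟩, hc⟩
  exact h.2 ⟨_, ⟨c + b, rfl⟩, by rw [sval_add, sval_add, hc, add_assoc]⟩

theorem sval_mem_apery_of_add_right {s : ℕ} {a b : Fin d → ℕ}
    (h : sval n (a + b) ∈ Apery n s) : sval n b ∈ Apery n s :=
  sval_mem_apery_of_add_left (add_comm a b ▸ h)

variable (n)

/-- The congruence on `ℕ^d` identifying factorizations with the same value and, if that value is in
`AP(S, s)`, the same length. For `s = nᵢ` it contains the exponents of all admissible binomials, so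
these cannot generate a non-homogeneous binomial of value in `AP(S, nᵢ)`. -/
def aperyCon (s : ℕ) : AddCon (Fin d → ℕ) where
  r a b := sval n a = sval n b ∧ (sval n a ∈ Apery n s → tlen a = tlen b)
  iseqv :=
    { refl := fun _ => ⟨rfl, fun _ => rfl⟩
      symm := fun h => ⟨h.1.symm, fun hb => (h.2 (h.1 ▸ hb)).symm⟩
      trans := fun h h' => ⟨h.1.trans h'.1, fun ha => (h.2 ha).trans (h'.2 (h.1 ▸ ha))⟩ }
  add' h h' :=
    ⟨by rw [sval_add, sval_add, h.1, h'.1], fun hs => by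
      rw [tlen_add, tlen_add, h.2 (sval_mem_apery_of_add_left hs),
        h'.2 (sval_mem_apery_of_add_right hs)]⟩

/-- The exponents of the admissible binomials: `x^a - x^b ∈ I_S` is homogeneous or has `xᵢ` in its
support. -/
def IsAdmissible (i : Fin d) (a b : Fin d → ℕ) : Prop :=
  sval n a = sval n b ∧ (tlen a ≠ tlen b → a i + b i ≠ 0)

variable {n} {i : Fin d} {a b : Fin d → ℕ}

theorem IsAdmissible.refl (a : Fin d → ℕ) : IsAdmissible n i a a :=
  ⟨rfl, fun h => (h rfl).elim⟩

theorem IsAdmissible.symm (h : IsAdmissible n i a b) : IsAdmissible n i b a :=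
  ⟨h.1.symm, fun hne => add_comm (a i) (b i) ▸ h.2 hne.symm⟩

theorem IsAdmissible.aperyCon (h : IsAdmissible n i a b) : aperyCon n (n i) a b := by
  refine ⟨h.1, fun ha => by_contra fun hne => h.2 hne ?_⟩
  rw [sval_mem_apery_iff.1 ha a rfl, sval_mem_apery_iff.1 ha b h.1.symm]

theorem exists_isAdmissible_isAdmissible (hn : ∀ j, 0 < n j)
    (hAp : HomogSet n (Apery n (n i))) (hab : sval n a = sval n b) :
    ∃ c, IsAdmissible n i a c ∧ IsAdmissible n i c b := by
  by_cases hlen : tlen a = tlen b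
  · exact ⟨a, .refl a, hab, fun hne => (hne hlen).elim⟩
  have hne : sval n a ≠ 0 := fun ha => hlen <| by
    rw [(sval_eq_zero_iff hn).1 ha, (sval_eq_zero_iff hn).1 (hab.symm.trans ha)]
  have hnot : sval n a ∉ Apery n (n i) := fun ha => hlen (hAp _ ha hne a b rfl hab.symm)
  obtain ⟨c, hca, hci⟩ : ∃ c, sval n c = sval n a ∧ c i ≠ 0 := by
    simpa [sval_mem_apery_iff] using hnot
  exact ⟨c, ⟨hca.symm, fun _ => by omega⟩, hca.trans hab, fun _ => by omega⟩

end Factorizations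

section Binomials

variable {k l : Type*} [CommRing k] [CommRing l] {d : ℕ}

theorem monom_eq_monomial (a : Fin d → ℕ) :
    monom k a = MvPolynomial.monomial (Finsupp.equivFunOnFinite.symm a) 1 := by
  simp [MvPolynomial.monomial_eq, monom, Finsupp.prod_fintype]

theorem map_monom (f : k →+* l) (a : Fin d → ℕ) :
    MvPolynomial.map f (monom k a) = monom l a := by
  simp [monom]

theorem monom_sub_monom_eq_iff [Nontrivial k] {a b a' b' : Fin d → ℕ} :
    monom k a - monom k b = monom k a' - monom k b' ↔
      a = a' ∧ b = b' ∨ (1 : k) = -1 ∧ a = b' ∧ b = a' ∨ a = b ∧ a' = b' := by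
  simpa [monom_eq_monomial, sub_eq_add_neg, MvPolynomial.single_eq_monomial] using
    AddMonoidAlgebra.single_add_single_inj (one_ne_zero (α := k)) (neg_ne_zero.2 one_ne_zero)
      (m₁ := Finsupp.equivFunOnFinite.symm a) (m₂ := Finsupp.equivFunOnFinite.symm b)
      (m₁' := Finsupp.equivFunOnFinite.symm a') (m₂' := Finsupp.equivFunOnFinite.symm b')

variable (k) in
/-- The pure difference binomials `x^a - x^b` with exponents related by `r`. -/
def binomials (r : (Fin d → ℕ) → (Fin d → ℕ) → Prop) : Set (MvPolynomial (Fin d) k) :=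
  {f | ∃ a b, r a b ∧ f = monom k a - monom k b}

variable {r : (Fin d → ℕ) → (Fin d → ℕ) → Prop}

theorem binomials_mono {r' : (Fin d → ℕ) → (Fin d → ℕ) → Prop} (h : ∀ {a b}, r a b → r' a b) :
    binomials k r ⊆ binomials k r' := by
  rintro - ⟨a, b, hab, rfl⟩
  exact ⟨a, b, h hab, rfl⟩

theorem image_map_binomials (f : k →+* l) :
    MvPolynomial.map f '' binomials k r = binomials l r := by
  apply Set.Subset.antisymm
  · rintro - ⟨-, ⟨a, b, hab, rfl⟩, rfl⟩
    exact ⟨a, b, hab, by simp only [map_sub, map_monom]⟩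
  · rintro - ⟨a, b, hab, rfl⟩
    exact ⟨_, ⟨a, b, hab, rfl⟩, by simp only [map_sub, map_monom]⟩

theorem monom_sub_monom_mem_binomials_iff [Nontrivial k] (hrefl : ∀ a, r a a)
    (hsymm : ∀ {a b}, r a b → r b a) {a b : Fin d → ℕ} :
    monom k a - monom k b ∈ binomials k r ↔ r a b := by
  refine ⟨?_, fun hab => ⟨a, b, hab, rfl⟩⟩
  rintro ⟨a', b', hab', heq⟩
  rcases monom_sub_monom_eq_iff.1 heq with ⟨rfl, rfl⟩ | ⟨-, rfl, rfl⟩ | ⟨rfl, -⟩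
  · exact hab'
  -- If `1 = -1`, a binomial only determines its exponents up to order.
  · exact hsymm hab'
  · exact hrefl a

theorem rel_of_monom_sub_monom_mem_span [Nontrivial k] (c : AddCon (Fin d → ℕ)) {a b : Fin d → ℕ}
    (hab : monom k a - monom k b ∈ Ideal.span (binomials k c)) : c a b := by
  let π : MvPolynomial (Fin d) k →+* AddMonoidAlgebra k c.Quotient :=
    AddMonoidAlgebra.mapDomainRingHom k (c.mk'.comp Finsupp.coeFnAddHom)
  have hπ (u : Fin d → ℕ) : π (monom k u) = AddMonoidAlgebra.single (u : c.Quotient) 1 := by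
    rw [monom_eq_monomial]
    exact AddMonoidAlgebra.mapDomain_single
  have hker : Ideal.span (binomials k c) ≤ RingHom.ker π := by
    rw [Ideal.span_le]
    rintro - ⟨u, v, huv, rfl⟩
    rw [SetLike.mem_coe, RingHom.mem_ker, map_sub, hπ, hπ, c.eq.2 huv, sub_self]
  have hab' := hker hab
  rw [RingHom.mem_ker, map_sub, hπ, hπ, sub_eq_zero,
    AddMonoidAlgebra.single_left_inj one_ne_zero] at hab'
  exact c.eq.1 hab'

end Binomials

section ToricIdeal

open Polynomial

variable {k : Type*} [CommRing k] {d : ℕ} {n : Fin d → ℕ}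

theorem aeval_monom (a : Fin d → ℕ) :
    MvPolynomial.aeval (fun j => (X : k[X]) ^ n j) (monom k a) = X ^ sval n a := by
  simp [monom, sval, ← pow_mul, Finset.prod_pow_eq_pow_sum, mul_comm]

theorem mem_toricIdeal_iff {p : MvPolynomial (Fin d) k} :
    p ∈ toricIdeal k n ↔ MvPolynomial.aeval (fun j => (X : k[X]) ^ n j) p = 0 :=
  Iff.rfl

theorem monom_sub_monom_mem_toricIdeal {a b : Fin d → ℕ} (hab : sval n a = sval n b) :
    monom k a - monom k b ∈ toricIdeal k n := by
  rw [mem_toricIdeal_iff, map_sub, aeval_monom, aeval_monom, hab, sub_self]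

theorem monom_sub_monom_mem_toricIdeal_iff [Nontrivial k] {a b : Fin d → ℕ} :
    monom k a - monom k b ∈ toricIdeal k n ↔ sval n a = sval n b := by
  refine ⟨fun hab => ?_, monom_sub_monom_mem_toricIdeal⟩
  rw [mem_toricIdeal_iff, map_sub, aeval_monom, aeval_monom, sub_eq_zero] at hab
  simpa using congrArg natDegree hab

theorem toricIdeal_le {J : Ideal (MvPolynomial (Fin d) k)}
    (hJ : ∀ a b, sval n a = sval n b → monom k a - monom k b ∈ J) : toricIdeal k n ≤ J := by
  -- Modulo `J` a monomial depends only on its image `X ^ s`, so `k[x] → k[x] ⧸ J` factors through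
  -- `x^a ↦ X ^ sval n a`; this `ψ` is the second factor.
  let ψ : k[X] →ₗ[k] MvPolynomial (Fin d) k ⧸ J :=
    (basisMonomials k).constr k fun s => Ideal.Quotient.mk J (monom k (Function.invFun (sval n) s))
  have hψ (s : ℕ) : ψ (X ^ s) = Ideal.Quotient.mk J (monom k (Function.invFun (sval n) s)) := by
    rw [← monomial_one_right_eq_X_pow]
    exact (basisMonomials k).constr_basis k _ s
  have hfactor : ψ ∘ₗ (MvPolynomial.aeval fun j => (X : k[X]) ^ n j).toLinearMap =
      (Ideal.Quotient.mkₐ k J).toLinearMap := by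
    refine (MvPolynomial.basisMonomials (Fin d) k).ext fun u => ?_
    obtain ⟨a, rfl⟩ := Finsupp.equivFunOnFinite.symm.surjective u
    simp only [MvPolynomial.coe_basisMonomials, ← monom_eq_monomial, LinearMap.comp_apply,
      AlgHom.toLinearMap_apply, aeval_monom, hψ, Ideal.Quotient.mkₐ_eq_mk]
    exact Ideal.Quotient.eq.2 (hJ _ _ Function.apply_invFun_apply)
  intro p hp
  have hzero := LinearMap.congr_fun hfactor p
  rw [LinearMap.comp_apply, AlgHom.toLinearMap_apply, mem_toricIdeal_iff.1 hp, map_zero] at hzero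
  exact Ideal.Quotient.eq_zero_iff_mem.1 hzero.symm

theorem toricIdeal_eq_span :
    toricIdeal k n = Ideal.span (binomials k fun a b => sval n a = sval n b) := by
  apply le_antisymm
  · exact toricIdeal_le fun a b hab => Ideal.subset_span ⟨a, b, hab, rfl⟩
  · rw [Ideal.span_le]
    rintro - ⟨a, b, hab, rfl⟩
    exact monom_sub_monom_mem_toricIdeal hab

variable (k n) in
theorem toricIdeal_fg : (toricIdeal k n).FG := by
  -- Over `ℤ` this is Hilbert's basis theorem, and the binomial generators are defined over `ℤ`.
  have hfg : (toricIdeal ℤ n).FG := IsNoetherian.noetherian _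
  have hmap := Ideal.FG.map hfg (MvPolynomial.map (Int.castRingHom k))
  rwa [toricIdeal_eq_span, Ideal.map_span, image_map_binomials, ← toricIdeal_eq_span] at hmap

variable {i : Fin d}

theorem span_binomials_isAdmissible_le :
    Ideal.span (binomials k (IsAdmissible n i)) ≤ toricIdeal k n := by
  rw [toricIdeal_eq_span]
  exact Ideal.span_mono (binomials_mono And.left)

variable (k) in
theorem homogSet_apery_iff_span_binomials_eq [Nontrivial k] (hn : ∀ j, 0 < n j) :
    HomogSet n (Apery n (n i)) ↔
      Ideal.span (binomials k (IsAdmissible n i)) = toricIdeal k n := by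
  constructor
  · intro hAp
    refine le_antisymm span_binomials_isAdmissible_le (toricIdeal_le fun a b hab => ?_)
    obtain ⟨c, hac, hcb⟩ := exists_isAdmissible_isAdmissible hn hAp hab
    rw [← sub_add_sub_cancel _ (monom k c)]
    exact add_mem (Ideal.subset_span ⟨a, c, hac, rfl⟩) (Ideal.subset_span ⟨c, b, hcb, rfl⟩)
  · intro hspan
    rintro t ht - a b rfl hb
    have hab : monom k a - monom k b ∈ Ideal.span (binomials k (aperyCon n (n i))) :=
      Ideal.span_mono (binomials_mono IsAdmissible.aperyCon)
        (hspan ▸ monom_sub_monom_mem_toricIdeal hb.symm)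
    exact (rel_of_monom_sub_monom_mem_span _ hab).2 ht

end ToricIdeal

theorem statement3_general {d : ℕ} (k : Type*) [CommRing k] [Nontrivial k]
    (n : Fin d → ℕ) (hn : ∀ j, 0 < n j) (i : Fin d) :
    HomogSet n (Apery n (n i)) ↔
      ∃ E : Set (MvPolynomial (Fin d) k),
        IsMinGenSet (toricIdeal k n) E ∧
        (∀ f ∈ E, ∃ a b : Fin d → ℕ, f = monom k a - monom k b) ∧
        (∀ a b : Fin d → ℕ, monom k a - monom k b ∈ E → tlen a ≠ tlen b →
          a i + b i ≠ 0) := by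
  rw [homogSet_apery_iff_span_binomials_eq k hn]
  constructor
  · intro hspan
    obtain ⟨E, hEB, hE⟩ := exists_isMinGenSet_subset (hspan ▸ toricIdeal_fg k n)
    refine ⟨E, hspan ▸ hE, fun f hf => ?_, fun a b hab => ?_⟩
    · obtain ⟨a, b, -, hf⟩ := hEB hf
      exact ⟨a, b, hf⟩
    · exact ((monom_sub_monom_mem_binomials_iff .refl .symm).1 (hEB hab)).2
  · rintro ⟨E, ⟨hE, -⟩, hbinom, hsupp⟩
    have hEB : E ⊆ binomials k (IsAdmissible n i) := by
      intro f hf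
      obtain ⟨a, b, rfl⟩ := hbinom f hf
      have hab := monom_sub_monom_mem_toricIdeal_iff.1 (hE ▸ Ideal.subset_span hf)
      exact ⟨a, b, ⟨hab, hsupp a b hf⟩, rfl⟩
    exact le_antisymm span_binomials_isAdmissible_le (hE ▸ Ideal.span_mono hEB)

/-- `AP(S,nᵢ)` is homogeneous iff there is a minimal binomial
generating set of `I_S` such that `xᵢ` is in the support of every
non-homogeneous element. -/
theorem statement3 {d : ℕ} (hd : 0 < d) (k : Type*) [Field k]
    (n : Fin d → ℕ) (hmono : StrictMono n) (hpos : 0 < n ⟨0, hd⟩)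
    (hnum : IsNumerical n) (hmin : MinGen n) (i : Fin d) :
    HomogSet n (Apery n (n i)) ↔
      ∃ E : Set (MvPolynomial (Fin d) k),
        IsMinGenSet (toricIdeal k n) E ∧
        (∀ f ∈ E, ∃ a b : Fin d → ℕ, f = monom k a - monom k b) ∧
        (∀ a b : Fin d → ℕ, monom k a - monom k b ∈ E → tlen a ≠ tlen b →
          a i + b i ≠ 0) :=
  statement3_general k n
    (fun _ => hpos.trans_le (hmono.monotone (Fin.mk_le_of_le_val (Nat.zero_le _)))) i
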